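/- Let H be a complex Hilbert space, ω a bounded self-adjoint operator on H with ω ≥ Id, f ∈ H and λ ≥ 0. Set g = ω^{1/2}f and ξ = (ω² + 4λ|g⟩⟨g|)^{1/2}. Then for every Hilbert (orthonormal) basis (e_i) of H one has ∑_i ‖(ω^{-1/2}ξ^{1/2} − Id) e_i‖² ≤ 16λ²‖ω^{-1/2}f‖⁴ and ∑_i ‖(ω^{1/2}ξ^{-1/2} − Id) e_i‖² ≤ 16λ²‖ω^{-1/2}f‖⁴. -/

import Mathlib

open scoped InnerProductSpace
open MeasureTheory
set_option synthInstance.maxHeartbeats 1000000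
set_option maxHeartbeats 1000000

/-- The rank-one operator `|g⟩⟨g| : x ↦ ⟨g, x⟩g`. -/
noncomputable def rankOne {H : Type*} [NormedAddCommGroup H] [InnerProductSpace ℂ H]
    (g : H) : H →L[ℂ] H := (innerSL ℂ g).smulRight g

/-!
Write `c = ω` and `d = ξ`. The operator `X = d - c` solves the Sylvester equation
`c X + X d = d² - c² = c (c⁻¹ d - c d⁻¹) d`, so it is Hilbert–Schmidt as soon as
`c⁻¹ d - c d⁻¹` is. Expanding the square of the Hilbert–Schmidt norm of
`c⁻¹ d - c d⁻¹ = c⁻¹ X + X d⁻¹` and using the cyclicity of the trace, the cross term becomes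
`‖c^{-1/2} X d^{-1/2}‖²`, so that
`‖c⁻¹ d - 1‖² + 2 ‖c^{-1/2} d^{1/2} - c^{1/2} d^{-1/2}‖² + ‖c d⁻¹ - 1‖² = ‖c⁻¹ d - c d⁻¹‖²`.
Using this for `(ω, ξ)`, and then for `(ω^{1/2}, ξ^{1/2})` to bound the middle term from below,
controls both quantities of interest by `‖ω⁻¹ ξ - ω ξ⁻¹‖²`. Finally
`ω⁻¹ ξ - ω ξ⁻¹ = ω⁻¹ (ξ² - ω²) ξ⁻¹` has rank one and norm
`4λ ‖ω⁻¹ g‖ ‖ξ⁻¹ g‖ ≤ 4λ ‖ω⁻¹ g‖²`, because `ξ² ≥ ω²`.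
-/

open ContinuousLinearMap
open scoped ENNReal Ring

section HilbertSchmidt

variable {𝕜 E F G ι κ : Type*} [RCLike 𝕜]
  [NormedAddCommGroup E] [InnerProductSpace 𝕜 E]
  [NormedAddCommGroup F] [InnerProductSpace 𝕜 F]
  [NormedAddCommGroup G] [InnerProductSpace 𝕜 G]

/-- The squared Hilbert–Schmidt norm of an operator, computed in a given Hilbert basis of its
domain. It takes values in `ℝ≥0∞`, so that `T` is a Hilbert–Schmidt operator if and only if
`hilbertSchmidtNormSq e T ≠ ∞`. -/
noncomputable def hilbertSchmidtNormSq (e : HilbertBasis ι 𝕜 E) (T : E →L[𝕜] F) : ℝ≥0∞ :=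
  ∑' i, ‖T (e i)‖ₑ ^ 2

/-- The real part of the Hilbert–Schmidt inner product `Tr (S† T)`, computed in a given Hilbert
basis. It is only meaningful for Hilbert–Schmidt operators: the sum defaults to `0` when it does
not converge. -/
noncomputable def hilbertSchmidtReInner (e : HilbertBasis ι 𝕜 E) (S T : E →L[𝕜] F) : ℝ :=
  ∑' i, RCLike.re ⟪S (e i), T (e i)⟫_𝕜

theorem enorm_sq_eq_tsum_enorm_inner_sq (e : HilbertBasis ι 𝕜 E) (x : E) :
    ‖x‖ₑ ^ 2 = ∑' i, ‖⟪e i, x⟫_𝕜‖ₑ ^ 2 := by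
  have parseval : HasSum (fun i ↦ ‖⟪e i, x⟫_𝕜‖ ^ 2) (‖x‖ ^ 2) := by
    have h := RCLike.hasSum_re 𝕜 (e.hasSum_inner_mul_inner x x)
    simpa only [inner_mul_symm_re_eq_norm, norm_mul, norm_inner_symm x, ← sq,
      inner_self_eq_norm_sq] using h
  simp only [← ofReal_norm, ← ENNReal.ofReal_pow (norm_nonneg _), ← parseval.tsum_eq]
  exact ENNReal.ofReal_tsum_of_nonneg (fun _ ↦ sq_nonneg _) parseval.summable

theorem hilbertSchmidtNormSq_adjoint [CompleteSpace E] [CompleteSpace F]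
    (e : HilbertBasis ι 𝕜 E) (e' : HilbertBasis κ 𝕜 F) (T : E →L[𝕜] F) :
    hilbertSchmidtNormSq e' (adjoint T) = hilbertSchmidtNormSq e T := by
  simp only [hilbertSchmidtNormSq, enorm_sq_eq_tsum_enorm_inner_sq e,
    enorm_sq_eq_tsum_enorm_inner_sq e']
  rw [ENNReal.tsum_comm]
  simp only [adjoint_inner_right, ← ofReal_norm, norm_inner_symm]

theorem hilbertSchmidtNormSq_comp_le_left (e : HilbertBasis ι 𝕜 E) (A : F →L[𝕜] G)
    (T : E →L[𝕜] F) :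
    hilbertSchmidtNormSq e (A ∘L T) ≤ ‖A‖ₑ ^ 2 * hilbertSchmidtNormSq e T := by
  simp only [hilbertSchmidtNormSq, ← ENNReal.tsum_mul_left, ← mul_pow]
  gcongr with i
  exact A.le_opENorm (T (e i))

theorem hilbertSchmidtNormSq_comp_le_right [CompleteSpace E] [CompleteSpace F] [CompleteSpace G]
    (e : HilbertBasis ι 𝕜 E) (e' : HilbertBasis κ 𝕜 F) (T : F →L[𝕜] G) (A : E →L[𝕜] F) :
    hilbertSchmidtNormSq e (T ∘L A) ≤ ‖A‖ₑ ^ 2 * hilbertSchmidtNormSq e' T := by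
  obtain ⟨_, e'', -⟩ := exists_hilbertBasis 𝕜 G
  rw [← hilbertSchmidtNormSq_adjoint e e'', ← hilbertSchmidtNormSq_adjoint e' e'', adjoint_comp,
    ← LinearIsometryEquiv.enorm_map adjoint A]
  exact hilbertSchmidtNormSq_comp_le_left e'' (adjoint A) (adjoint T)

theorem hilbertSchmidtNormSq_comp_ne_top_left (e : HilbertBasis ι 𝕜 E) (A : F →L[𝕜] G)
    {T : E →L[𝕜] F} (hT : hilbertSchmidtNormSq e T ≠ ∞) :
    hilbertSchmidtNormSq e (A ∘L T) ≠ ∞ :=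
  ne_top_of_le_ne_top (ENNReal.mul_ne_top (ENNReal.pow_ne_top enorm_ne_top) hT)
    (hilbertSchmidtNormSq_comp_le_left e A T)

theorem hilbertSchmidtNormSq_comp_ne_top_right [CompleteSpace E] [CompleteSpace F]
    [CompleteSpace G] (e : HilbertBasis ι 𝕜 E) (e' : HilbertBasis κ 𝕜 F) {T : F →L[𝕜] G}
    (A : E →L[𝕜] F) (hT : hilbertSchmidtNormSq e' T ≠ ∞) :
    hilbertSchmidtNormSq e (T ∘L A) ≠ ∞ :=
  ne_top_of_le_ne_top (ENNReal.mul_ne_top (ENNReal.pow_ne_top enorm_ne_top) hT)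
    (hilbertSchmidtNormSq_comp_le_right e e' T A)

theorem hilbertSchmidtNormSq_rankOne (e : HilbertBasis ι 𝕜 E) (x : F) (y : E) :
    hilbertSchmidtNormSq e (InnerProductSpace.rankOne 𝕜 x y) = ‖x‖ₑ ^ 2 * ‖y‖ₑ ^ 2 := by
  simp only [hilbertSchmidtNormSq, InnerProductSpace.rankOne_apply, enorm_smul, mul_pow,
    ENNReal.tsum_mul_right, enorm_sq_eq_tsum_enorm_inner_sq e y, mul_comm (‖x‖ₑ ^ 2)]
  simp only [← ofReal_norm, norm_inner_symm]

theorem hilbertSchmidtNormSq_neg (e : HilbertBasis ι 𝕜 E) (T : E →L[𝕜] F) :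
    hilbertSchmidtNormSq e (-T) = hilbertSchmidtNormSq e T := by
  simp only [hilbertSchmidtNormSq, neg_apply, enorm_neg]

theorem toReal_hilbertSchmidtNormSq (e : HilbertBasis ι 𝕜 E) (T : E →L[𝕜] F) :
    (hilbertSchmidtNormSq e T).toReal = ∑' i, ‖T (e i)‖ ^ 2 := by
  rw [hilbertSchmidtNormSq, ENNReal.tsum_toReal_eq fun _ ↦ ENNReal.pow_ne_top enorm_ne_top]
  simp only [ENNReal.toReal_pow, toReal_enorm]

theorem summable_norm_sq_iff_hilbertSchmidtNormSq_ne_top (e : HilbertBasis ι 𝕜 E)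
    (T : E →L[𝕜] F) : (Summable fun i ↦ ‖T (e i)‖ ^ 2) ↔ hilbertSchmidtNormSq e T ≠ ∞ := by
  refine ⟨fun h ↦ ?_, fun h ↦ ?_⟩
  · simpa only [hilbertSchmidtNormSq, ENNReal.ofReal_pow (norm_nonneg _), ofReal_norm] using
      h.tsum_ofReal_ne_top
  · simpa only [ENNReal.toReal_pow, toReal_enorm] using ENNReal.summable_toReal h

theorem summable_re_inner_of_hilbertSchmidtNormSq_ne_top (e : HilbertBasis ι 𝕜 E)
    {S T : E →L[𝕜] F} (hS : hilbertSchmidtNormSq e S ≠ ∞) (hT : hilbertSchmidtNormSq e T ≠ ∞) :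
    Summable fun i ↦ RCLike.re ⟪S (e i), T (e i)⟫_𝕜 := by
  rw [← summable_norm_sq_iff_hilbertSchmidtNormSq_ne_top] at hS hT
  refine .of_norm_bounded (hS.add hT) fun i ↦ ?_
  have cauchy_schwarz := (RCLike.abs_re_le_norm _).trans
    (norm_inner_le_norm (𝕜 := 𝕜) (S (e i)) (T (e i)))
  rw [Real.norm_eq_abs]
  nlinarith [sq_nonneg (‖S (e i)‖ - ‖T (e i)‖), sq_nonneg (‖S (e i)‖ + ‖T (e i)‖)]

theorem hilbertSchmidtNormSq_add_ne_top (e : HilbertBasis ι 𝕜 E) {S T : E →L[𝕜] F}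
    (hS : hilbertSchmidtNormSq e S ≠ ∞) (hT : hilbertSchmidtNormSq e T ≠ ∞) :
    hilbertSchmidtNormSq e (S + T) ≠ ∞ := by
  have summable_inner := summable_re_inner_of_hilbertSchmidtNormSq_ne_top e hS hT
  rw [← summable_norm_sq_iff_hilbertSchmidtNormSq_ne_top] at hS hT ⊢
  simpa only [add_apply, norm_add_sq (𝕜 := 𝕜)] using (hS.add (summable_inner.mul_left 2)).add hT

theorem hilbertSchmidtReInner_self (e : HilbertBasis ι 𝕜 E) (T : E →L[𝕜] F) :
    hilbertSchmidtReInner e T T = (hilbertSchmidtNormSq e T).toReal := by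
  simp only [hilbertSchmidtReInner, toReal_hilbertSchmidtNormSq, inner_self_eq_norm_sq]

theorem toReal_hilbertSchmidtNormSq_add (e : HilbertBasis ι 𝕜 E) {S T : E →L[𝕜] F}
    (hS : hilbertSchmidtNormSq e S ≠ ∞) (hT : hilbertSchmidtNormSq e T ≠ ∞) :
    (hilbertSchmidtNormSq e (S + T)).toReal = (hilbertSchmidtNormSq e S).toReal +
      2 * hilbertSchmidtReInner e S T + (hilbertSchmidtNormSq e T).toReal := by
  have summable_inner := summable_re_inner_of_hilbertSchmidtNormSq_ne_top e hS hT
  rw [← summable_norm_sq_iff_hilbertSchmidtNormSq_ne_top] at hS hT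
  simp only [toReal_hilbertSchmidtNormSq, hilbertSchmidtReInner, add_apply, norm_add_sq (𝕜 := 𝕜)]
  rw [(hS.add (summable_inner.mul_left 2)).tsum_add hT,
    hS.tsum_add (summable_inner.mul_left 2), tsum_mul_left]

theorem hilbertSchmidtReInner_adjoint [CompleteSpace E] [CompleteSpace F]
    (e : HilbertBasis ι 𝕜 E) (e' : HilbertBasis κ 𝕜 F) {S T : E →L[𝕜] F}
    (hS : hilbertSchmidtNormSq e S ≠ ∞) (hT : hilbertSchmidtNormSq e T ≠ ∞) :
    hilbertSchmidtReInner e' (adjoint S) (adjoint T) = hilbertSchmidtReInner e S T := by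
  have polarization := toReal_hilbertSchmidtNormSq_add e hS hT
  have polarization_adjoint := toReal_hilbertSchmidtNormSq_add e' (S := adjoint S) (T := adjoint T)
    (by rwa [hilbertSchmidtNormSq_adjoint e]) (by rwa [hilbertSchmidtNormSq_adjoint e])
  rw [← map_add] at polarization_adjoint
  simp only [hilbertSchmidtNormSq_adjoint e] at polarization_adjoint
  linarith

theorem hilbertSchmidtReInner_comp_left [CompleteSpace F] [CompleteSpace G]
    (e : HilbertBasis ι 𝕜 E) (A : F →L[𝕜] G) (S : E →L[𝕜] F) (T : E →L[𝕜] G) :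
    hilbertSchmidtReInner e (A ∘L S) T = hilbertSchmidtReInner e S (adjoint A ∘L T) := by
  simp only [hilbertSchmidtReInner, comp_apply, adjoint_inner_right]

theorem hilbertSchmidtReInner_comp_right [CompleteSpace E] [CompleteSpace F] [CompleteSpace G]
    (e : HilbertBasis ι 𝕜 E) (e' : HilbertBasis κ 𝕜 F) (A : E →L[𝕜] F)
    {S : F →L[𝕜] G} {T : E →L[𝕜] G}
    (hS : hilbertSchmidtNormSq e' S ≠ ∞) (hT : hilbertSchmidtNormSq e T ≠ ∞) :
    hilbertSchmidtReInner e (S ∘L A) T = hilbertSchmidtReInner e' S (T ∘L adjoint A) := by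
  obtain ⟨_, e'', -⟩ := exists_hilbertBasis 𝕜 G
  calc hilbertSchmidtReInner e (S ∘L A) T
      = hilbertSchmidtReInner e'' (adjoint A ∘L adjoint S) (adjoint T) := by
        rw [← adjoint_comp, hilbertSchmidtReInner_adjoint e e''
          (hilbertSchmidtNormSq_comp_ne_top_right e e' A hS) hT]
    _ = hilbertSchmidtReInner e'' (adjoint S) (adjoint (T ∘L adjoint A)) := by
        rw [hilbertSchmidtReInner_comp_left, adjoint_comp]
    _ = hilbertSchmidtReInner e' S (T ∘L adjoint A) :=
        hilbertSchmidtReInner_adjoint e' e'' hS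
          (hilbertSchmidtNormSq_comp_ne_top_right e' e (adjoint A) hT)

theorem hilbertSchmidtNormSq_comp_comp_add_comp_comp [CompleteSpace E] [CompleteSpace F]
    (e : HilbertBasis ι 𝕜 E) {P : F →L[𝕜] F} {Q : E →L[𝕜] E} {X : E →L[𝕜] F}
    (hP : IsSelfAdjoint P) (hQ : IsSelfAdjoint Q) (hX : hilbertSchmidtNormSq e X ≠ ∞) :
    hilbertSchmidtNormSq e (P ∘L P ∘L X + X ∘L Q ∘L Q) =
      hilbertSchmidtNormSq e (P ∘L P ∘L X) + 2 * hilbertSchmidtNormSq e (P ∘L X ∘L Q)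
        + hilbertSchmidtNormSq e (X ∘L Q ∘L Q) := by
  have hPX := hilbertSchmidtNormSq_comp_ne_top_left e P hX
  have hPPX := hilbertSchmidtNormSq_comp_ne_top_left e P hPX
  have hXQQ := hilbertSchmidtNormSq_comp_ne_top_right e e (Q ∘L Q) hX
  have hPXQ : hilbertSchmidtNormSq e (P ∘L X ∘L Q) ≠ ∞ :=
    hilbertSchmidtNormSq_comp_ne_top_right e e Q hPX
  -- Cyclicity of the trace: `Tr (X† P² X Q²) = Tr ((P X Q)† (P X Q))`.
  have cross_term : hilbertSchmidtReInner e (P ∘L P ∘L X) (X ∘L Q ∘L Q) =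
      (hilbertSchmidtNormSq e (P ∘L X ∘L Q)).toReal := by
    calc hilbertSchmidtReInner e (P ∘L P ∘L X) (X ∘L Q ∘L Q)
        = hilbertSchmidtReInner e (P ∘L X) ((P ∘L X ∘L Q) ∘L adjoint Q) := by
          rw [hilbertSchmidtReInner_comp_left, hP.adjoint_eq, hQ.adjoint_eq]; rfl
      _ = hilbertSchmidtReInner e (P ∘L X ∘L Q) (P ∘L X ∘L Q) :=
          (hilbertSchmidtReInner_comp_right e e Q hPX hPXQ).symm
      _ = (hilbertSchmidtNormSq e (P ∘L X ∘L Q)).toReal := hilbertSchmidtReInner_self e _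
  have hsum := ENNReal.add_ne_top.2 ⟨hPPX, ENNReal.mul_ne_top (ENNReal.ofNat_ne_top (n := 2)) hPXQ⟩
  rw [← ENNReal.toReal_eq_toReal_iff' (hilbertSchmidtNormSq_add_ne_top e hPPX hXQQ)
    (ENNReal.add_ne_top.2 ⟨hsum, hXQQ⟩), toReal_hilbertSchmidtNormSq_add e hPPX hXQQ, cross_term,
    ENNReal.toReal_add hsum hXQQ, ENNReal.toReal_add hPPX (ENNReal.add_ne_top.1 hsum).2,
    ENNReal.toReal_mul, ENNReal.toReal_ofNat]

end HilbertSchmidt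

section Sylvester

theorem convex_setOf_hilbertSchmidtNormSq_le {ι 𝕜 E F : Type*} [RCLike 𝕜]
    [NormedAddCommGroup E] [InnerProductSpace 𝕜 E]
    [NormedAddCommGroup F] [InnerProductSpace 𝕜 F] [NormedSpace ℝ F] [SMulCommClass 𝕜 ℝ F]
    (e : HilbertBasis ι 𝕜 E) (M : ℝ≥0∞) :
    Convex ℝ {T : E →L[𝕜] F | hilbertSchmidtNormSq e T ≤ M} := by
  intro S hS T hT a b ha hb hab
  have convex_sq (x y : F) :
      ‖a • x + b • y‖ₑ ^ 2 ≤ ENNReal.ofReal a * ‖x‖ₑ ^ 2 + ENNReal.ofReal b * ‖y‖ₑ ^ 2 := by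
    have h := ((convexOn_univ_norm (E := F)).pow (fun _ _ ↦ norm_nonneg _) 2).2
      (Set.mem_univ x) (Set.mem_univ y) ha hb hab
    simp only [← ofReal_norm, ← ENNReal.ofReal_pow (norm_nonneg _), ← ENNReal.ofReal_mul, ha, hb]
    rw [← ENNReal.ofReal_add (by positivity) (by positivity)]
    exact ENNReal.ofReal_le_ofReal h
  calc hilbertSchmidtNormSq e (a • S + b • T)
      ≤ ∑' i, (ENNReal.ofReal a * ‖S (e i)‖ₑ ^ 2 + ENNReal.ofReal b * ‖T (e i)‖ₑ ^ 2) :=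
        ENNReal.tsum_le_tsum fun i ↦ convex_sq (S (e i)) (T (e i))
    _ = ENNReal.ofReal a * hilbertSchmidtNormSq e S
          + ENNReal.ofReal b * hilbertSchmidtNormSq e T := by
        simp only [ENNReal.tsum_add, ENNReal.tsum_mul_left, hilbertSchmidtNormSq]
    _ ≤ ENNReal.ofReal a * M + ENNReal.ofReal b * M := by gcongr <;> assumption
    _ = M := by rw [← add_mul, ← ENNReal.ofReal_add ha hb, hab, ENNReal.ofReal_one, one_mul]

theorem isClosed_setOf_hilbertSchmidtNormSq_le {ι 𝕜 E F : Type*} [RCLike 𝕜]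
    [NormedAddCommGroup E] [InnerProductSpace 𝕜 E]
    [NormedAddCommGroup F] [InnerProductSpace 𝕜 F]
    (e : HilbertBasis ι 𝕜 E) (M : ℝ≥0∞) :
    IsClosed {T : E →L[𝕜] F | hilbertSchmidtNormSq e T ≤ M} :=
  LowerSemicontinuous.isClosed_preimage
    (lowerSemicontinuous_tsum fun i ↦ Continuous.lowerSemicontinuous (by fun_prop)) M

theorem mem_of_eq_smul_add_smul_of_nonexpansive {V : Type*} [SeminormedAddCommGroup V]
    [NormedSpace ℝ V] {K : Set V} (hconvex : Convex ℝ K) (hclosed : IsClosed K) {T : V → V}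
    (hmaps : Set.MapsTo T K K) (hT : LipschitzWith 1 T) {θ : ℝ} (hθ0 : 0 < θ) (hθ1 : θ ≤ 1)
    {x y : V} (hy : y ∈ K) (hx : x = θ • y + (1 - θ) • T x) : x ∈ K := by
  have infDist_le {z : V} (hz : z ∈ K) : Metric.infDist x K ≤ (1 - θ) * dist x z := by
    have mem : θ • y + (1 - θ) • T z ∈ K :=
      hconvex hy (hmaps hz) hθ0.le (sub_nonneg.2 hθ1) (add_sub_cancel θ 1)
    calc Metric.infDist x K
        ≤ dist x (θ • y + (1 - θ) • T z) := Metric.infDist_le_dist_of_mem mem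
      _ = dist (θ • y + (1 - θ) • T x) (θ • y + (1 - θ) • T z) := by rw [← hx]
      _ = (1 - θ) * dist (T x) (T z) := by
        rw [dist_add_left, dist_smul₀, Real.norm_of_nonneg (sub_nonneg.2 hθ1)]
      _ ≤ (1 - θ) * dist x z := by
        gcongr
        simpa only [NNReal.coe_one, one_mul] using hT.dist_le_mul x z
  -- Minimising over `z` shows that `δ = infDist x K` satisfies `δ ≤ (1 - θ) δ`, so `δ = 0`.
  rw [hclosed.mem_iff_infDist_zero ⟨y, hy⟩]
  by_contra hne
  have hpos : 0 < Metric.infDist x K := Metric.infDist_nonneg.lt_of_ne' hne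
  obtain ⟨z, hz, hxz⟩ := (Metric.infDist_lt_iff ⟨y, hy⟩).1
    (lt_add_of_pos_right (Metric.infDist x K) (mul_pos hθ0 hpos))
  nlinarith [infDist_le hz, mul_pos (mul_pos hθ0 hθ0) hpos]

variable {A : Type*} [CStarAlgebra A] [PartialOrder A] [StarOrderedRing A]

theorem exists_pos_algebraMap_le {a : A} (ha : IsStrictlyPositive a) :
    ∃ r > 0, algebraMap ℝ A r ≤ a := by
  obtain _ | _ := subsingleton_or_nontrivial A
  · exact ⟨1, one_pos, (Subsingleton.elim _ _).le⟩
  · exact (CFC.exists_pos_algebraMap_le_iff ha.isSelfAdjoint).2 fun _ hx ↦ ha.spectrum_pos hx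

theorem norm_algebraMap_sub_le {a : A} {r c : ℝ} (hr : 0 ≤ r) (hra : algebraMap ℝ A r ≤ a)
    (hrc : r ≤ c) (hac : ‖a‖ ≤ c) : ‖algebraMap ℝ A c - a‖ ≤ c - r := by
  have ha : 0 ≤ a := (algebraMap_nonneg A hr).trans hra
  have hle : a ≤ algebraMap ℝ A c :=
    (CStarAlgebra.norm_le_iff_le_algebraMap a (hr.trans hrc) ha).1 hac
  rw [CStarAlgebra.norm_le_iff_le_algebraMap _ (sub_nonneg.2 hrc) (sub_nonneg.2 hle), map_sub]
  gcongr

theorem lipschitzWith_one_smul_mul_add_smul_mul {R : Type*} [SeminormedRing R] [NormedAlgebra ℝ R]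
    {u v : R} (hu : ‖u‖ ≤ 1) (hv : ‖v‖ ≤ 1) :
    LipschitzWith 1 fun z ↦ (2⁻¹ : ℝ) • (u * z) + (2⁻¹ : ℝ) • (z * v) := by
  refine LipschitzWith.of_dist_le_mul fun z w ↦ ?_
  have hleft : ‖u * (z - w)‖ ≤ ‖z - w‖ :=
    (norm_mul_le _ _).trans (mul_le_of_le_one_left (norm_nonneg _) hu)
  have hright : ‖(z - w) * v‖ ≤ ‖z - w‖ :=
    (norm_mul_le _ _).trans (mul_le_of_le_one_right (norm_nonneg _) hv)
  calc dist ((2⁻¹ : ℝ) • (u * z) + (2⁻¹ : ℝ) • (z * v))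
        ((2⁻¹ : ℝ) • (u * w) + (2⁻¹ : ℝ) • (w * v))
      = ‖(2⁻¹ : ℝ) • (u * (z - w)) + (2⁻¹ : ℝ) • ((z - w) * v)‖ := by
        rw [dist_eq_norm, mul_sub, sub_mul]; congr 1; module
    _ ≤ 2⁻¹ * ‖u * (z - w)‖ + 2⁻¹ * ‖(z - w) * v‖ := by
        simpa only [norm_smul, norm_inv, Real.norm_ofNat] using
          norm_add_le ((2⁻¹ : ℝ) • (u * (z - w))) ((2⁻¹ : ℝ) • ((z - w) * v))
    _ ≤ (1 : NNReal) * dist z w := by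
        rw [dist_eq_norm, NNReal.coe_one]; linarith

theorem mem_of_inv_smul_mul_add_mul_mem {K : Set A} (hconvex : Convex ℝ K) (hclosed : IsClosed K)
    (hleft : ∀ u : A, ‖u‖ ≤ 1 → ∀ y ∈ K, u * y ∈ K)
    (hright : ∀ u : A, ‖u‖ ≤ 1 → ∀ y ∈ K, y * u ∈ K)
    {a b x : A} {r : ℝ} (hr : 0 < r) (ha : algebraMap ℝ A r ≤ a) (hb : algebraMap ℝ A r ≤ b)
    (hx : (2 * r)⁻¹ • (a * x + x * b) ∈ K) : x ∈ K := by
  obtain ⟨c, hc⟩ := exists_gt (max r (max ‖a‖ ‖b‖))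
  obtain ⟨hrc, hac, hbc⟩ : r < c ∧ ‖a‖ < c ∧ ‖b‖ < c := by simpa only [max_lt_iff] using hc
  have hc0 : 0 < c := hr.trans hrc
  have hcr : 0 < c - r := sub_pos.2 hrc
  have norm_le_one {z : A} (hz : ‖algebraMap ℝ A c - z‖ ≤ c - r) :
      ‖(c - r)⁻¹ • (algebraMap ℝ A c - z)‖ ≤ 1 := by
    rwa [norm_smul, Real.norm_of_nonneg (inv_nonneg.2 hcr.le), inv_mul_le_one₀ hcr]
  set u := (c - r)⁻¹ • (algebraMap ℝ A c - a) with hu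
  set v := (c - r)⁻¹ • (algebraMap ℝ A c - b) with hv
  have hu1 : ‖u‖ ≤ 1 := norm_le_one (norm_algebraMap_sub_le hr.le ha hrc.le hac.le)
  have hv1 : ‖v‖ ≤ 1 := norm_le_one (norm_algebraMap_sub_le hr.le hb hrc.le hbc.le)
  have hux : (c - r) • (u * x) = c • x - a * x := by
    rw [hu, smul_mul_assoc, smul_inv_smul₀ hcr.ne', sub_mul, Algebra.smul_def]
  have hxv : (c - r) • (x * v) = c • x - x * b := by
    rw [hv, mul_smul_comm, smul_inv_smul₀ hcr.ne', mul_sub, Algebra.smul_def, Algebra.commutes]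
  -- Replacing `a = c - (c - r) u` and `b = c - (c - r) v` in `a x + x b` exhibits `x` as a fixed
  -- point of a strict contraction whose constant term is the given element of `K`.
  have fixed_point : x = (r / c) • ((2 * r)⁻¹ • (a * x + x * b))
      + (1 - r / c) • ((2⁻¹ : ℝ) • (u * x) + (2⁻¹ : ℝ) • (x * v)) := by
    calc x
        = c⁻¹ • (c • x) := (inv_smul_smul₀ hc0.ne' x).symm
      _ = c⁻¹ • ((2⁻¹ : ℝ) • (a * x + x * b)
            + (2⁻¹ : ℝ) • (c • x - a * x) + (2⁻¹ : ℝ) • (c • x - x * b)) := by module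
      _ = (r / c) • ((2 * r)⁻¹ • (a * x + x * b))
            + (1 - r / c) • ((2⁻¹ : ℝ) • (u * x) + (2⁻¹ : ℝ) • (x * v)) := by
        rw [← hux, ← hxv]; match_scalars <;> field_simp
  exact mem_of_eq_smul_add_smul_of_nonexpansive hconvex hclosed
    (fun z hz ↦ hconvex (hleft u hu1 z hz) (hright v hv1 z hz) (by norm_num) (by norm_num)
      (by norm_num))
    (lipschitzWith_one_smul_mul_add_smul_mul hu1 hv1) (div_pos hr hc0)
    ((div_le_one hc0).2 hrc.le) hx fixed_point

theorem enorm_sq_mul_le_of_norm_le_one {V : Type*} [SeminormedAddGroup V] {u : V} (hu : ‖u‖ ≤ 1)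
    (M : ℝ≥0∞) : ‖u‖ₑ ^ 2 * M ≤ M := by
  have h : ‖u‖ₑ ≤ 1 := by simpa only [← ofReal_norm, ENNReal.ofReal_le_one] using hu
  exact mul_le_of_le_one_left' (pow_le_one₀ zero_le h)

variable {ι H : Type*} [NormedAddCommGroup H] [InnerProductSpace ℂ H] [CompleteSpace H]

theorem hilbertSchmidtNormSq_le_inv_smul_mul_add_mul (e : HilbertBasis ι ℂ H) {a b : H →L[ℂ] H}
    {r : ℝ} (hr : 0 < r) (ha : algebraMap ℝ (H →L[ℂ] H) r ≤ a)
    (hb : algebraMap ℝ (H →L[ℂ] H) r ≤ b) (X : H →L[ℂ] H) :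
    hilbertSchmidtNormSq e X ≤ hilbertSchmidtNormSq e ((2 * r)⁻¹ • (a * X + X * b)) := by
  have hconvex := convex_setOf_hilbertSchmidtNormSq_le (F := H) e
    (hilbertSchmidtNormSq e ((2 * r)⁻¹ • (a * X + X * b)))
  exact mem_of_inv_smul_mul_add_mul_mem hconvex (isClosed_setOf_hilbertSchmidtNormSq_le e _)
    (fun u hu T hT ↦ (hilbertSchmidtNormSq_comp_le_left e u T).trans
      ((enorm_sq_mul_le_of_norm_le_one hu _).trans hT))
    (fun u hu T hT ↦ (hilbertSchmidtNormSq_comp_le_right e e T u).trans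
      ((enorm_sq_mul_le_of_norm_le_one hu _).trans hT))
    hr ha hb (le_refl (hilbertSchmidtNormSq e ((2 * r)⁻¹ • (a * X + X * b))))

theorem hilbertSchmidtNormSq_ne_top_of_mul_add_mul (e : HilbertBasis ι ℂ H) {a b X : H →L[ℂ] H}
    (ha : IsStrictlyPositive a) (hb : IsStrictlyPositive b)
    (h : hilbertSchmidtNormSq e (a * X + X * b) ≠ ∞) : hilbertSchmidtNormSq e X ≠ ∞ := by
  obtain ⟨r, hr, hra⟩ := exists_pos_algebraMap_le ha
  obtain ⟨s, hs, hsb⟩ := exists_pos_algebraMap_le hb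
  refine ne_top_of_le_ne_top ?_ (hilbertSchmidtNormSq_le_inv_smul_mul_add_mul e (lt_min hr hs)
    ((algebraMap_mono _ (min_le_left r s)).trans hra)
    ((algebraMap_mono _ (min_le_right r s)).trans hsb) X)
  rw [← id_comp (a * X + X * b), ← smul_comp]
  exact hilbertSchmidtNormSq_comp_ne_top_left e _ h

end Sylvester

section Comparison

theorem inverse_sqrt_mul_inverse_sqrt {A : Type*} [CStarAlgebra A] [PartialOrder A]
    [StarOrderedRing A] {a : A} (ha : 0 ≤ a) :
    (CFC.sqrt a)⁻¹ʳ * (CFC.sqrt a)⁻¹ʳ = a⁻¹ʳ := by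
  rw [← Ring.mul_inverse_rev' (Commute.refl _), CFC.sqrt_mul_sqrt_self a ha]

theorem isStrictlyPositive_sq {A : Type*} [CStarAlgebra A] [PartialOrder A] [StarOrderedRing A]
    {a : A} (ha : IsStrictlyPositive a) : IsStrictlyPositive (a ^ 2) :=
  (ha.isUnit.pow 2).isStrictlyPositive ha.isSelfAdjoint.sq_nonneg

theorem rankOne_eq_innerProductSpace_rankOne {H : Type*} [NormedAddCommGroup H]
    [InnerProductSpace ℂ H] (g : H) : rankOne g = InnerProductSpace.rankOne ℂ g g := rfl

theorem rankOne_nonneg {H : Type*} [NormedAddCommGroup H] [InnerProductSpace ℂ H] (g : H) :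
    0 ≤ rankOne g :=
  (nonneg_iff_isPositive _).2 (InnerProductSpace.isPositive_rankOne_self g)

theorem norm_apply_le_of_star_mul_self_le {𝕜 E : Type*} [RCLike 𝕜] [NormedAddCommGroup E]
    [InnerProductSpace 𝕜 E] [CompleteSpace E] {S T : E →L[𝕜] E} (h : star S * S ≤ star T * T)
    (x : E) : ‖S x‖ ≤ ‖T x‖ := by
  have hpos := (le_def _ _).1 h |>.re_inner_nonneg_left x
  simp only [star_eq_adjoint, mul_def, sub_apply, inner_sub_left, map_sub,
    ← apply_norm_sq_eq_inner_adjoint_left, sub_nonneg] at hpos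
  exact (sq_le_sq₀ (norm_nonneg _) (norm_nonneg _)).1 hpos

variable {ι H : Type*} [NormedAddCommGroup H] [InnerProductSpace ℂ H] [CompleteSpace H]

theorem hilbertSchmidtNormSq_sub_ne_top_of_inverse_mul (e : HilbertBasis ι ℂ H) {c d : H →L[ℂ] H}
    (hc : IsStrictlyPositive c) (hd : IsStrictlyPositive d)
    (h : hilbertSchmidtNormSq e (c⁻¹ʳ * d - c * d⁻¹ʳ) ≠ ∞) :
    hilbertSchmidtNormSq e (d - c) ≠ ∞ := by
  refine hilbertSchmidtNormSq_ne_top_of_mul_add_mul e hc hd ?_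
  have sylvester : c * (d - c) + (d - c) * d = c * ((c⁻¹ʳ * d - c * d⁻¹ʳ) * d) := by
    rw [sub_mul (c⁻¹ʳ * d), Ring.inverse_mul_cancel_right _ _ hd.isUnit, mul_sub c (_ * _),
      mul_assoc, Ring.mul_inverse_cancel_left _ _ hc.isUnit, mul_sub, sub_mul]
    abel
  rw [sylvester]
  exact hilbertSchmidtNormSq_comp_ne_top_left e c (hilbertSchmidtNormSq_comp_ne_top_right e e d h)

theorem le_hilbertSchmidtNormSq_inverse_mul_sub_mul_inverse (e : HilbertBasis ι ℂ H)
    {c d : H →L[ℂ] H} (hc : IsStrictlyPositive c) (hd : IsStrictlyPositive d) :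
    hilbertSchmidtNormSq e (c⁻¹ʳ * d - 1)
        + 2 * hilbertSchmidtNormSq e
            ((CFC.sqrt c)⁻¹ʳ * CFC.sqrt d - CFC.sqrt c * (CFC.sqrt d)⁻¹ʳ)
        + hilbertSchmidtNormSq e (c * d⁻¹ʳ - 1)
      ≤ hilbertSchmidtNormSq e (c⁻¹ʳ * d - c * d⁻¹ʳ) := by
  obtain h_top | h_ne_top := eq_or_ne (hilbertSchmidtNormSq e (c⁻¹ʳ * d - c * d⁻¹ʳ)) ∞
  · exact h_top ▸ le_top
  have left : (CFC.sqrt c)⁻¹ʳ * ((CFC.sqrt c)⁻¹ʳ * (d - c)) = c⁻¹ʳ * d - 1 := by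
    rw [← mul_assoc, inverse_sqrt_mul_inverse_sqrt hc.nonneg, mul_sub,
      Ring.inverse_mul_cancel _ hc.isUnit]
  have right : (d - c) * ((CFC.sqrt d)⁻¹ʳ * (CFC.sqrt d)⁻¹ʳ) = -(c * d⁻¹ʳ - 1) := by
    rw [inverse_sqrt_mul_inverse_sqrt hd.nonneg, sub_mul, Ring.mul_inverse_cancel _ hd.isUnit,
      neg_sub]
  have middle : (CFC.sqrt c)⁻¹ʳ * ((d - c) * (CFC.sqrt d)⁻¹ʳ) =
      (CFC.sqrt c)⁻¹ʳ * CFC.sqrt d - CFC.sqrt c * (CFC.sqrt d)⁻¹ʳ := by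
    calc (CFC.sqrt c)⁻¹ʳ * ((d - c) * (CFC.sqrt d)⁻¹ʳ)
        = (CFC.sqrt c)⁻¹ʳ *
            ((CFC.sqrt d * CFC.sqrt d - CFC.sqrt c * CFC.sqrt c) * (CFC.sqrt d)⁻¹ʳ) := by
          rw [CFC.sqrt_mul_sqrt_self c hc.nonneg, CFC.sqrt_mul_sqrt_self d hd.nonneg]
      _ = (CFC.sqrt c)⁻¹ʳ * CFC.sqrt d - CFC.sqrt c * (CFC.sqrt d)⁻¹ʳ := by
          rw [sub_mul, Ring.mul_inverse_cancel_right _ _ (hd.sqrt d).isUnit, mul_sub, mul_assoc,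
            Ring.inverse_mul_cancel_left _ _ (hc.sqrt c).isUnit]
  have expansion := hilbertSchmidtNormSq_comp_comp_add_comp_comp e
    (hc.sqrt c).ringInverse.isSelfAdjoint (hd.sqrt d).ringInverse.isSelfAdjoint
    (hilbertSchmidtNormSq_sub_ne_top_of_inverse_mul e hc hd h_ne_top)
  simp only [← mul_def, left, right, middle, hilbertSchmidtNormSq_neg] at expansion
  rw [← expansion, ← sub_eq_add_neg, sub_sub_sub_cancel_right]

theorem two_mul_hilbertSchmidtNormSq_sqrt_le (e : HilbertBasis ι ℂ H) {c d : H →L[ℂ] H}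
    (hc : IsStrictlyPositive c) (hd : IsStrictlyPositive d) :
    2 * (hilbertSchmidtNormSq e ((CFC.sqrt c)⁻¹ʳ * CFC.sqrt d - 1)
        + hilbertSchmidtNormSq e (CFC.sqrt c * (CFC.sqrt d)⁻¹ʳ - 1))
      ≤ hilbertSchmidtNormSq e (c⁻¹ʳ * d - c * d⁻¹ʳ) := by
  calc 2 * (hilbertSchmidtNormSq e ((CFC.sqrt c)⁻¹ʳ * CFC.sqrt d - 1)
        + hilbertSchmidtNormSq e (CFC.sqrt c * (CFC.sqrt d)⁻¹ʳ - 1))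
      ≤ 2 * hilbertSchmidtNormSq e
          ((CFC.sqrt c)⁻¹ʳ * CFC.sqrt d - CFC.sqrt c * (CFC.sqrt d)⁻¹ʳ) := by
        gcongr
        refine le_trans ?_
          (le_hilbertSchmidtNormSq_inverse_mul_sub_mul_inverse e (hc.sqrt c) (hd.sqrt d))
        gcongr
        exact le_self_add
    _ ≤ hilbertSchmidtNormSq e (c⁻¹ʳ * d - c * d⁻¹ʳ) :=
        le_trans (le_add_self.trans le_self_add)
          (le_hilbertSchmidtNormSq_inverse_mul_sub_mul_inverse e hc hd)

theorem norm_inverse_apply_le_of_sq_le_sq {a b : H →L[ℂ] H} (ha : IsStrictlyPositive a)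
    (hb : IsStrictlyPositive b) (h : a ^ 2 ≤ b ^ 2) (x : H) : ‖b⁻¹ʳ x‖ ≤ ‖a⁻¹ʳ x‖ := by
  refine norm_apply_le_of_star_mul_self_le ?_ x
  rw [ha.ringInverse.isSelfAdjoint.star_eq, hb.ringInverse.isSelfAdjoint.star_eq,
    ← Ring.mul_inverse_rev' (Commute.refl _), ← Ring.mul_inverse_rev' (Commute.refl _), ← sq, ← sq]
  exact CStarAlgebra.ringInverse_le_ringInverse h (isStrictlyPositive_sq ha)

theorem inverse_mul_sub_mul_inverse_of_sq_eq_sq_add_rankOne {a b : H →L[ℂ] H} (ha : IsUnit a)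
    (hb : IsUnit b) (hb_selfAdjoint : IsSelfAdjoint b) {t : ℝ} {g : H}
    (h : b ^ 2 = a ^ 2 + t • rankOne g) :
    a⁻¹ʳ * b - a * b⁻¹ʳ = t • InnerProductSpace.rankOne ℂ (a⁻¹ʳ g) (b⁻¹ʳ g) := by
  calc a⁻¹ʳ * b - a * b⁻¹ʳ
      = a⁻¹ʳ * ((b ^ 2 - a ^ 2) * b⁻¹ʳ) := by
        rw [sq, sq, sub_mul, Ring.mul_inverse_cancel_right _ _ hb, mul_sub, mul_assoc a,
          Ring.inverse_mul_cancel_left _ _ ha]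
    _ = t • (a⁻¹ʳ ∘L (InnerProductSpace.rankOne ℂ g g) ∘L b⁻¹ʳ) := by
        rw [h, add_sub_cancel_left, smul_mul_assoc, mul_smul_comm,
          rankOne_eq_innerProductSpace_rankOne, mul_def, mul_def]
    _ = t • InnerProductSpace.rankOne ℂ (a⁻¹ʳ g) (b⁻¹ʳ g) := by
        rw [InnerProductSpace.rankOne_comp, hb_selfAdjoint.ringInverse.adjoint_eq,
          InnerProductSpace.comp_rankOne]

theorem hilbertSchmidtNormSq_inverse_mul_sub_mul_inverse_le (e : HilbertBasis ι ℂ H)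
    {a b : H →L[ℂ] H} (ha : IsStrictlyPositive a) (hb : IsStrictlyPositive b) {t : ℝ}
    (ht : 0 ≤ t) {g : H} (h : b ^ 2 = a ^ 2 + t • rankOne g) :
    hilbertSchmidtNormSq e (a⁻¹ʳ * b - a * b⁻¹ʳ) ≤ ENNReal.ofReal (t ^ 2 * ‖a⁻¹ʳ g‖ ^ 4) := by
  have norm_le : ‖b⁻¹ʳ g‖ ≤ ‖a⁻¹ʳ g‖ := norm_inverse_apply_le_of_sq_le_sq ha hb
    (h ▸ le_add_of_nonneg_right (smul_nonneg ht (rankOne_nonneg g))) g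
  have hrank : a⁻¹ʳ * b - a * b⁻¹ʳ = InnerProductSpace.rankOne ℂ (t • a⁻¹ʳ g) (b⁻¹ʳ g) := by
    rw [inverse_mul_sub_mul_inverse_of_sq_eq_sq_add_rankOne ha.isUnit hb.isUnit
      hb.isSelfAdjoint h]
    ext x
    simp only [smul_apply, InnerProductSpace.rankOne_apply]
    exact smul_comm _ _ _
  calc hilbertSchmidtNormSq e (a⁻¹ʳ * b - a * b⁻¹ʳ)
      = ENNReal.ofReal (t ^ 2 * ‖a⁻¹ʳ g‖ ^ 2 * ‖b⁻¹ʳ g‖ ^ 2) := by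
        rw [hrank, hilbertSchmidtNormSq_rankOne, ENNReal.ofReal_mul (by positivity), ← ofReal_norm,
          ← ofReal_norm, ← ENNReal.ofReal_pow (norm_nonneg _), ← ENNReal.ofReal_pow (norm_nonneg _),
          norm_smul, mul_pow, Real.norm_eq_abs, sq_abs]
    _ ≤ ENNReal.ofReal (t ^ 2 * ‖a⁻¹ʳ g‖ ^ 2 * ‖a⁻¹ʳ g‖ ^ 2) := by gcongr
    _ = ENNReal.ofReal (t ^ 2 * ‖a⁻¹ʳ g‖ ^ 4) := by ring_nf

end Comparison

theorem hilbert_schmidt_bounds_bogoliubov_general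
    {H : Type*} [NormedAddCommGroup H] [InnerProductSpace ℂ H] [CompleteSpace H] {ι : Type*}
    {ω : H →L[ℂ] H} (hω : IsStrictlyPositive ω) {f : H} {lam : ℝ} (hlam : 0 ≤ lam)
    {g : H} (hg : g = CFC.sqrt ω f)
    {ξ : H →L[ℂ] H} (hξ : ξ = CFC.sqrt (ω ^ 2 + (4 * lam) • rankOne g))
    (e : HilbertBasis ι ℂ H) :
    hilbertSchmidtNormSq e ((CFC.sqrt ω)⁻¹ʳ * CFC.sqrt ξ - 1)
        + hilbertSchmidtNormSq e (CFC.sqrt ω * (CFC.sqrt ξ)⁻¹ʳ - 1)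
      ≤ ENNReal.ofReal (8 * lam ^ 2 * ‖(CFC.sqrt ω)⁻¹ʳ f‖ ^ 4) := by
  have hrank : 0 ≤ (4 * lam) • rankOne g := smul_nonneg (by positivity) (rankOne_nonneg g)
  have hξ_sq_pos : IsStrictlyPositive (ω ^ 2 + (4 * lam) • rankOne g) :=
    (isStrictlyPositive_sq hω).add_nonneg hrank
  have hξ_pos : IsStrictlyPositive ξ := hξ ▸ hξ_sq_pos.sqrt
  have hξ_sq : ξ ^ 2 = ω ^ 2 + (4 * lam) • rankOne g := by
    rw [hξ, CFC.sq_sqrt _ hξ_sq_pos.nonneg]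
  have hg_inv : ω⁻¹ʳ g = (CFC.sqrt ω)⁻¹ʳ f := by
    have cancel : ω⁻¹ʳ * CFC.sqrt ω = (CFC.sqrt ω)⁻¹ʳ := by
      rw [← inverse_sqrt_mul_inverse_sqrt hω.nonneg,
        Ring.inverse_mul_cancel_right _ _ (hω.sqrt ω).isUnit]
    rw [hg]
    exact DFunLike.congr_fun cancel f
  refine (ENNReal.mul_le_mul_iff_right two_ne_zero ENNReal.ofNat_ne_top).1 ?_
  calc 2 * (hilbertSchmidtNormSq e ((CFC.sqrt ω)⁻¹ʳ * CFC.sqrt ξ - 1)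
        + hilbertSchmidtNormSq e (CFC.sqrt ω * (CFC.sqrt ξ)⁻¹ʳ - 1))
      ≤ hilbertSchmidtNormSq e (ω⁻¹ʳ * ξ - ω * ξ⁻¹ʳ) :=
        two_mul_hilbertSchmidtNormSq_sqrt_le e hω hξ_pos
    _ ≤ ENNReal.ofReal ((4 * lam) ^ 2 * ‖ω⁻¹ʳ g‖ ^ 4) :=
        hilbertSchmidtNormSq_inverse_mul_sub_mul_inverse_le e hω hξ_pos (by positivity) hξ_sq
    _ = 2 * ENNReal.ofReal (8 * lam ^ 2 * ‖(CFC.sqrt ω)⁻¹ʳ f‖ ^ 4) := by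
        rw [hg_inv, ← ENNReal.ofReal_ofNat 2, ← ENNReal.ofReal_mul two_pos.le]
        ring_nf

/-- Hilbert–Schmidt bounds of Lemma 6.7: for `ω ≥ Id` self-adjoint, `f ∈ H`, `λ ≥ 0`,
`g = ω^{1/2}f` and `ξ = (ω² + 4λ|g⟩⟨g|)^{1/2}`, for every Hilbert basis `(e i)` one has
`∑ᵢ ‖(ω^{-1/2}ξ^{1/2} − Id) e i‖² ≤ 16λ²‖ω^{-1/2}f‖⁴` and
`∑ᵢ ‖(ω^{1/2}ξ^{-1/2} − Id) e i‖² ≤ 16λ²‖ω^{-1/2}f‖⁴`. -/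
theorem hilbert_schmidt_bounds_bogoliubov
    {H : Type*} [NormedAddCommGroup H] [InnerProductSpace ℂ H] [CompleteSpace H]
    {ι : Type*}
    (ω : H →L[ℂ] H) (hω : IsSelfAdjoint ω) (hω1 : (1 : H →L[ℂ] H) ≤ ω)
    (f : H) (lam : ℝ) (hlam : 0 ≤ lam)
    (g : H) (hg : g = CFC.sqrt ω f)
    (ξ : H →L[ℂ] H) (hξ : ξ = CFC.sqrt (ω ^ 2 + (4 * lam) • rankOne g))
    (e : HilbertBasis ι ℂ H) :
    ∑' i, ENNReal.ofReal (‖(Ring.inverse (CFC.sqrt ω) * CFC.sqrt ξ - 1) (e i)‖ ^ 2) ≤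
        ENNReal.ofReal (16 * lam ^ 2 * ‖(Ring.inverse (CFC.sqrt ω)) f‖ ^ 4) ∧
    ∑' i, ENNReal.ofReal (‖(CFC.sqrt ω * Ring.inverse (CFC.sqrt ξ) - 1) (e i)‖ ^ 2) ≤
        ENNReal.ofReal (16 * lam ^ 2 * ‖(Ring.inverse (CFC.sqrt ω)) f‖ ^ 4) := by
  have general := hilbert_schmidt_bounds_bogoliubov_general (isStrictlyPositive_one.of_le hω1)
    hlam hg hξ e
  have const_le : (8 : ℝ) * lam ^ 2 * ‖(Ring.inverse (CFC.sqrt ω)) f‖ ^ 4 ≤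
      16 * lam ^ 2 * ‖(Ring.inverse (CFC.sqrt ω)) f‖ ^ 4 := by gcongr; norm_num
  have sum_le := general.trans (ENNReal.ofReal_le_ofReal const_le)
  simp only [ENNReal.ofReal_pow (norm_nonneg _), ofReal_norm]
  exact ⟨le_self_add.trans sum_le, le_add_self.trans sum_le⟩
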